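/- arXiv:2206.01342 — 2 statements merged into one kernel-verified Lean document; each statement's English description precedes it below -/
import Mathlib

section
/- Let A be a symmetric positive definite d×d matrix with eigenvalues λ₁ ≥ λ₂ ≥ … ≥ λ_d > 0 and let φ₁ be a unit eigenvector of A for λ₁. Let w be a unit vector with c := ⟨φ₁, w⟩ > 0, define μ := ((1 + c)/(2c²)) · (λ₂/λ₁)², and let w' := A w / ‖A w‖₂ be the power-iteration update. Then ⟨w', w⟩ ≥ (1 − μ(1 − c)) · c, and consequently ‖w' − w‖₂ ≤ √(2 (1 + μ c)(1 − c)). -/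
/-!
Split `w = ⟪φ, w⟫ φ + v` with `v ⊥ φ`. A symmetric `T` preserves this splitting, so with
`c = |⟪φ, w⟫|` one gets `‖T w‖² ≤ λ₁² c² + λ₂² (1 - c²)`, which is `(λ₁ c)² (1 + 2 μ (1 - c))` by
the choice of `μ`, while positivity gives `⟪T w, w⟫ ≥ λ₁ c²`. The quotient of the two bounds is
controlled by `(1 - y) √(1 + 2 y) ≤ 1` at `y = μ (1 - c)`, and the displacement bound follows by
expanding `‖w' - w‖²`.
-/

open Matrix Finset

/-- Euclidean norm of a vector in `ℝ^d` given by the dot product. -/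
noncomputable def euclNorm {d : ℕ} (v : Fin d → ℝ) : ℝ := Real.sqrt (v ⬝ᵥ v)

open WithLp
open scoped InnerProductSpace

lemma one_sub_mul_le_of_sq_le {x y p : ℝ} (hx : 0 ≤ x) (hp : 0 < p)
    (h : x ^ 2 ≤ p ^ 2 * (1 + 2 * y)) : (1 - y) * x ≤ p := by
  have hxy : x ^ 2 * x ≤ p ^ 2 * (1 + 2 * y) * x := mul_le_mul_of_nonneg_right h hx
  -- Twice the slack, `x³ - 3 p² x + 2 p³`, has a double root at the equality case `x = p`.
  have hcubic : 0 ≤ (x - p) ^ 2 * (x + 2 * p) := by positivity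
  refine le_of_mul_le_mul_left ?_ (pow_pos hp 2)
  linarith

section Eigenvector

variable {𝕜 E : Type*} [RCLike 𝕜] [NormedAddCommGroup E] [InnerProductSpace 𝕜 E]
  {T : E →ₗ[𝕜] E} {φ w : E} {lam₁ lam₂ : ℝ}

lemma norm_sub_eq_sqrt_of_norm_eq_one {u : E} (hu : ‖u‖ = 1) (hw : ‖w‖ = 1) :
    ‖u - w‖ = √(2 * (1 - RCLike.re ⟪u, w⟫_𝕜)) := by
  rw [← Real.sqrt_sq (norm_nonneg (u - w)), norm_sub_sq (𝕜 := 𝕜), hu, hw]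
  ring_nf

lemma exists_orthogonal_eq_inner_smul_add (hφ : ‖φ‖ = 1) (w : E) :
    ∃ v, ⟪φ, v⟫_𝕜 = 0 ∧ w = ⟪φ, w⟫_𝕜 • φ + v := by
  refine ⟨w - ⟪φ, w⟫_𝕜 • φ, ?_, (add_sub_cancel _ _).symm⟩
  rw [inner_sub_right, inner_smul_right, inner_self_eq_one_of_norm_eq_one hφ, mul_one, sub_self]

lemma norm_smul_add_sq_of_inner_eq_zero (hφ : ‖φ‖ = 1) {v : E} (hv : ⟪φ, v⟫_𝕜 = 0) (α : 𝕜) :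
    ‖α • φ + v‖ ^ 2 = ‖α‖ ^ 2 + ‖v‖ ^ 2 := by
  have h : ⟪α • φ, v⟫_𝕜 = 0 := by rw [inner_smul_left, hv, mul_zero]
  rw [sq, norm_add_sq_eq_norm_sq_add_norm_sq_of_inner_eq_zero _ _ h, norm_smul, hφ, mul_one, sq, sq]

lemma inner_eigenvector_apply (hT : T.IsSymmetric) (hTφ : T φ = (lam₁ : 𝕜) • φ) (v : E) :
    ⟪φ, T v⟫_𝕜 = lam₁ * ⟪φ, v⟫_𝕜 := by
  rw [← hT, hTφ, inner_smul_left, RCLike.conj_ofReal]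

lemma norm_apply_sq_le_of_orthogonal_le (hT : T.IsSymmetric) (hφ : ‖φ‖ = 1)
    (hTφ : T φ = (lam₁ : 𝕜) • φ) (hgap : ∀ v, ⟪φ, v⟫_𝕜 = 0 → ‖T v‖ ≤ lam₂ * ‖v‖) (w : E) :
    ‖T w‖ ^ 2 ≤ lam₁ ^ 2 * ‖⟪φ, w⟫_𝕜‖ ^ 2 + lam₂ ^ 2 * (‖w‖ ^ 2 - ‖⟪φ, w⟫_𝕜‖ ^ 2) := by
  obtain ⟨v, hv, hw⟩ := exists_orthogonal_eq_inner_smul_add (𝕜 := 𝕜) hφ w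
  generalize ⟪φ, w⟫_𝕜 = α at hw ⊢
  subst hw
  have hTv : ⟪φ, T v⟫_𝕜 = 0 := by rw [inner_eigenvector_apply hT hTφ, hv, mul_zero]
  have hTw : T (α • φ + v) = (α * lam₁) • φ + T v := by rw [map_add, map_smul, hTφ, smul_smul]
  calc ‖T (α • φ + v)‖ ^ 2 = lam₁ ^ 2 * ‖α‖ ^ 2 + ‖T v‖ ^ 2 := by
        rw [hTw, norm_smul_add_sq_of_inner_eq_zero hφ hTv, norm_mul, mul_pow, RCLike.norm_ofReal,
          sq_abs, mul_comm]
    _ ≤ lam₁ ^ 2 * ‖α‖ ^ 2 + (lam₂ * ‖v‖) ^ 2 := by gcongr; exact hgap v hv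
    _ = lam₁ ^ 2 * ‖α‖ ^ 2 + lam₂ ^ 2 * (‖α • φ + v‖ ^ 2 - ‖α‖ ^ 2) := by
        rw [norm_smul_add_sq_of_inner_eq_zero hφ hv, add_sub_cancel_left, mul_pow]

lemma eigenvalue_mul_norm_inner_sq_le_re_inner_apply (hT : T.IsPositive) (hφ : ‖φ‖ = 1)
    (hTφ : T φ = (lam₁ : 𝕜) • φ) (w : E) :
    lam₁ * ‖⟪φ, w⟫_𝕜‖ ^ 2 ≤ RCLike.re ⟪T w, w⟫_𝕜 := by
  obtain ⟨v, hv, hw⟩ := exists_orthogonal_eq_inner_smul_add (𝕜 := 𝕜) hφ w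
  generalize ⟪φ, w⟫_𝕜 = α at hw ⊢
  subst hw
  have hTv : ⟪φ, T v⟫_𝕜 = 0 := by rw [inner_eigenvector_apply hT.isSymmetric hTφ, hv, mul_zero]
  have hvφ : ⟪T v, φ⟫_𝕜 = 0 := inner_eq_zero_symm.mp hTv
  have hquad : ⟪T (α • φ + v), α • φ + v⟫_𝕜 = (lam₁ * ‖α‖ ^ 2 : ℝ) + ⟪T v, v⟫_𝕜 := by
    simp only [map_add, map_smul, hTφ, inner_add_left, inner_add_right, inner_smul_left,
      inner_smul_right, inner_self_eq_one_of_norm_eq_one hφ, hv, hvφ, RCLike.conj_ofReal]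
    push_cast
    linear_combination (lam₁ : 𝕜) * RCLike.conj_mul α
  rw [hquad, map_add, RCLike.ofReal_re]
  exact le_add_of_nonneg_right (hT.re_inner_nonneg_left v)

theorem stmt7_general (hT : T.IsPositive) (hφ : ‖φ‖ = 1) (hTφ : T φ = (lam₁ : 𝕜) • φ)
    (hlam₁ : 0 < lam₁) (hgap : ∀ v, ⟪φ, v⟫_𝕜 = 0 → ‖T v‖ ≤ lam₂ * ‖v‖) (hw : ‖w‖ = 1)
    {c : ℝ} (hc : c = ‖⟪φ, w⟫_𝕜‖) (hcpos : 0 < c)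
    {μ : ℝ} (hμ : μ = (1 + c) / (2 * c ^ 2) * (lam₂ / lam₁) ^ 2) :
    let w' : E := ((‖T w‖⁻¹ : ℝ) : 𝕜) • T w
    (1 - μ * (1 - c)) * c ≤ RCLike.re ⟪w', w⟫_𝕜 ∧
      ‖w' - w‖ ≤ √(2 * (1 + μ * c) * (1 - c)) := by
  intro w'
  have hnum : lam₁ * c ^ 2 ≤ RCLike.re ⟪T w, w⟫_𝕜 :=
    hc ▸ eigenvalue_mul_norm_inner_sq_le_re_inner_apply hT hφ hTφ w
  have hden : ‖T w‖ ^ 2 ≤ (lam₁ * c) ^ 2 * (1 + 2 * (μ * (1 - c))) := by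
    have hsq := norm_apply_sq_le_of_orthogonal_le hT.isSymmetric hφ hTφ hgap w
    rw [← hc, hw] at hsq
    refine hsq.trans_eq ?_
    rw [hμ]
    field_simp
    ring
  have hTw : T w ≠ 0 := by
    intro h
    rw [h, inner_zero_left, map_zero] at hnum
    exact hnum.not_gt (by positivity)
  have hinner : (1 - μ * (1 - c)) * c ≤ RCLike.re ⟪w', w⟫_𝕜 := by
    rw [inner_smul_left, RCLike.conj_ofReal, RCLike.re_ofReal_mul,
      le_inv_mul_iff₀ (norm_pos_iff.mpr hTw)]
    calc ‖T w‖ * ((1 - μ * (1 - c)) * c) = (1 - μ * (1 - c)) * ‖T w‖ * c := by ring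
      _ ≤ lam₁ * c * c := by
        have hratio := one_sub_mul_le_of_sq_le (norm_nonneg _) (mul_pos hlam₁ hcpos) hden
        exact mul_le_mul_of_nonneg_right hratio hcpos.le
      _ = lam₁ * c ^ 2 := by ring
      _ ≤ RCLike.re ⟪T w, w⟫_𝕜 := hnum
  refine ⟨hinner, ?_⟩
  have hw' : ‖w'‖ = 1 := by simp [w', norm_smul, hTw]
  rw [norm_sub_eq_sqrt_of_norm_eq_one (𝕜 := 𝕜) hw' hw]
  exact Real.sqrt_le_sqrt (by linarith)

end Eigenvector

section Eigenbasis

variable {𝕜 E ι : Type*} [RCLike 𝕜] [NormedAddCommGroup E] [InnerProductSpace 𝕜 E] [Fintype ι]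
  {T : E →ₗ[𝕜] E} {e : OrthonormalBasis ι 𝕜 E} {lam : ι → ℝ}

lemma inner_apply_eq_sum_of_eigenbasis (hT : ∀ i, T (e i) = (lam i : 𝕜) • e i) (x y : E) :
    ⟪T x, y⟫_𝕜 = ∑ i, lam i * (⟪x, e i⟫_𝕜 * ⟪e i, y⟫_𝕜) := by
  conv_lhs => rw [← e.sum_repr' x]
  simp only [map_sum, map_smul, hT, sum_inner, inner_smul_left, inner_conj_symm,
    RCLike.conj_ofReal]
  exact Finset.sum_congr rfl fun i _ => mul_left_comm _ _ _

lemma isSymmetric_of_eigenbasis (hT : ∀ i, T (e i) = (lam i : 𝕜) • e i) : T.IsSymmetric := by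
  intro x y
  rw [← inner_conj_symm x, inner_apply_eq_sum_of_eigenbasis hT,
    inner_apply_eq_sum_of_eigenbasis hT, map_sum]
  simp only [map_mul, RCLike.conj_ofReal, inner_conj_symm, mul_comm]

lemma isPositive_of_eigenbasis (hT : ∀ i, T (e i) = (lam i : 𝕜) • e i) (hlam : ∀ i, 0 ≤ lam i) :
    T.IsPositive := by
  refine ⟨isSymmetric_of_eigenbasis hT, fun x => ?_⟩
  rw [inner_apply_eq_sum_of_eigenbasis hT, map_sum]
  refine Finset.sum_nonneg fun i _ => ?_
  rw [RCLike.re_ofReal_mul, ← inner_conj_symm, RCLike.conj_mul, ← RCLike.ofReal_pow,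
    RCLike.ofReal_re]
  exact mul_nonneg (hlam i) (sq_nonneg _)

lemma norm_apply_le_of_eigenbasis (hT : ∀ i, T (e i) = (lam i : 𝕜) • e i) {C : ℝ} (hC : 0 ≤ C)
    {v : E} (hv : ∀ i, ⟪e i, v⟫_𝕜 ≠ 0 → |lam i| ≤ C) : ‖T v‖ ≤ C * ‖v‖ := by
  have hcoord (i : ι) : ⟪e i, T v⟫_𝕜 = lam i * ⟪e i, v⟫_𝕜 :=
    inner_eigenvector_apply (isSymmetric_of_eigenbasis hT) (hT i) v
  refine (sq_le_sq₀ (norm_nonneg _) (by positivity)).mp ?_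
  rw [mul_pow, ← e.sum_sq_norm_inner_right, ← e.sum_sq_norm_inner_right, Finset.mul_sum]
  refine Finset.sum_le_sum fun i _ => ?_
  rw [hcoord, norm_mul, mul_pow, RCLike.norm_ofReal]
  by_cases hi : ⟪e i, v⟫_𝕜 = 0
  · simp only [hi, norm_zero, zero_pow two_ne_zero, mul_zero, le_refl]
  · gcongr
    exact hv i hi

lemma norm_apply_le_of_antitone_eigenbasis [Preorder ι] (hT : ∀ i, T (e i) = (lam i : 𝕜) • e i)
    (hlam : ∀ i, 0 ≤ lam i) (hanti : Antitone lam) {i₀ i₁ : ι} (hsecond : ∀ i ≠ i₀, i₁ ≤ i)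
    {v : E} (hv : ⟪e i₀, v⟫_𝕜 = 0) : ‖T v‖ ≤ lam i₁ * ‖v‖ := by
  refine norm_apply_le_of_eigenbasis hT (hlam i₁) fun i hi => ?_
  rw [abs_of_nonneg (hlam i)]
  exact hanti (hsecond i fun h => hi (h ▸ hv))

end Eigenbasis

section DotProduct

variable {ι : Type*} [Fintype ι]

lemma inner_toLp_eq_dotProduct (x y : ι → ℝ) : ⟪toLp 2 x, toLp 2 y⟫_ℝ = x ⬝ᵥ y := by
  rw [EuclideanSpace.inner_toLp_toLp, star_trivial, dotProduct_comm]

lemma norm_toLp_eq_euclNorm {d : ℕ} (x : Fin d → ℝ) : ‖toLp 2 x‖ = euclNorm x := by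
  rw [norm_eq_sqrt_real_inner, inner_toLp_eq_dotProduct, euclNorm]

lemma exists_orthonormalBasis_eq_toLp [DecidableEq ι] {φ : ι → ι → ℝ}
    (hφ : ∀ i j, φ i ⬝ᵥ φ j = if i = j then (1 : ℝ) else 0) :
    ∃ e : OrthonormalBasis ι ℝ (EuclideanSpace ℝ ι), ∀ i, e i = toLp 2 (φ i) := by
  have hon : Orthonormal ℝ fun i => toLp 2 (φ i) := by
    simpa only [orthonormal_iff_ite, inner_toLp_eq_dotProduct] using hφ
  have hspan := hon.linearIndependent.span_eq_top_of_card_eq_finrank' finrank_euclideanSpace.symm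
  exact ⟨OrthonormalBasis.mk hon hspan.ge, congrFun (OrthonormalBasis.coe_mk hon hspan.ge)⟩

lemma toEuclideanLin_toLp_eq_smul [DecidableEq ι] {A : Matrix ι ι ℝ} {x : ι → ℝ} {r : ℝ}
    (h : A *ᵥ x = r • x) : toEuclideanLin A (toLp 2 x) = r • toLp 2 x := by
  rw [toLpLin_toLp, toLin'_apply, h, toLp_smul]

end DotProduct

/-- bound on the movement of one power-iteration step. Let `A` be
symmetric positive definite with orthonormal eigenbasis `φ` and decreasing eigenvalues
`λ`, let `w` be a unit vector with `c = ⟨φ₁, w⟩ > 0`, and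
`μ = ((1+c)/(2c²))(λ₂/λ₁)²`. Then the update `w' = A w / ‖A w‖₂` satisfies
`⟨w', w⟩ ≥ (1 − μ(1−c)) c` and `‖w' − w‖₂ ≤ √(2(1 + μ c)(1 − c))`. -/
theorem stmt7 {d : ℕ} (hd : 2 ≤ d)
    (A : Matrix (Fin d) (Fin d) ℝ) (hA : A.IsSymm)
    (lam : Fin d → ℝ) (φ : Fin d → Fin d → ℝ)
    (hortho : ∀ i j, φ i ⬝ᵥ φ j = if i = j then (1 : ℝ) else 0)
    (heig : ∀ i, A.mulVec (φ i) = lam i • φ i)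
    (hsorted : ∀ i j : Fin d, i ≤ j → lam j ≤ lam i)
    (hpos : ∀ i, 0 < lam i)
    (w : Fin d → ℝ) (hw : w ⬝ᵥ w = 1)
    (c : ℝ) (hc : c = φ ⟨0, by omega⟩ ⬝ᵥ w) (hcpos : 0 < c)
    (μ : ℝ)
    (hμ : μ = (1 + c) / (2 * c ^ 2) * (lam ⟨1, by omega⟩ / lam ⟨0, by omega⟩) ^ 2) :
    let w' : Fin d → ℝ := (euclNorm (A.mulVec w))⁻¹ • A.mulVec w
    (1 - μ * (1 - c)) * c ≤ w' ⬝ᵥ w ∧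
      euclNorm (w' - w) ≤ Real.sqrt (2 * (1 + μ * c) * (1 - c)) := by
  obtain ⟨e, he⟩ := exists_orthonormalBasis_eq_toLp hortho
  have hT (i) : toEuclideanLin A (e i) = lam i • e i := he i ▸ toEuclideanLin_toLp_eq_smul (heig i)
  have hlam (i) : 0 ≤ lam i := (hpos i).le
  have hw1 : ‖toLp 2 w‖ = 1 := by rw [norm_toLp_eq_euclNorm, euclNorm, hw, Real.sqrt_one]
  have hc1 : c = ‖⟪e ⟨0, by omega⟩, toLp 2 w⟫_ℝ‖ := by
    rw [he, inner_toLp_eq_dotProduct, ← hc, Real.norm_of_nonneg hcpos.le]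
  have hsecond (i : Fin d) (hi : i ≠ ⟨0, by omega⟩) : ⟨1, by omega⟩ ≤ i :=
    Nat.one_le_iff_ne_zero.mpr (Fin.val_ne_of_ne hi)
  have hgap := fun v => norm_apply_le_of_antitone_eigenbasis (v := v) hT hlam hsorted hsecond
  simpa only [toLpLin_toLp, toLin'_apply, norm_toLp_eq_euclNorm, RCLike.ofReal_real_eq_id, id,
    RCLike.re_to_real, ← toLp_smul, ← toLp_sub, inner_toLp_eq_dotProduct] using
    stmt7_general (isPositive_of_eigenbasis hT hlam) (e.norm_eq_one _) (hT _) (hpos _) hgap hw1 hc1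
      hcpos hμ
end

section
/- Let (Ω, P) be a finite probability space, let z : Ω → {0, …, C−1} with p_c := P[z = c] ∈ (0, 1) for every c, and let g_k : Ω → ℝ^{n_k} for k = 1, …, K be random vectors that are conditionally independent given z (i.e., for every c, the family (g_1, …, g_K) is independent under the conditional measure P[· | z = c]). Let g : Ω → ℝ^{n_1 + … + n_K} be the concatenation of g_1, …, g_K, and for each c define Δ(c) := E[g | z = c] − E[g | z ≠ c]. Then Var[g] = B + Σ_{c} p_c (1 − p_c)² Δ(c) Δ(c)ᵀ, where B is the block-diagonal matrix whose (k, k) block equals Σ_c p_c · Var[g_k | z = c] and whose (k, k') blocks are zero for k ≠ k'. -/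
open Matrix Finset
open scoped Classical

/-- Expectation of a random vector on a finite probability space with weights `P`. -/
noncomputable def expecVec {Ω ι : Type*} [Fintype Ω] [Fintype ι] (P : Ω → ℝ)
    (h : Ω → ι → ℝ) : ι → ℝ :=
  ∑ ω, P ω • h ω

/-- Covariance matrix `E[h hᵀ] − E[h] E[h]ᵀ` of a random vector on a finite probability
space with weights `P`. -/
noncomputable def covMat {Ω ι : Type*} [Fintype Ω] [Fintype ι] (P : Ω → ℝ)
    (h : Ω → ι → ℝ) : Matrix ι ι ℝ :=
  (∑ ω, P ω • vecMulVec (h ω) (h ω)) - vecMulVec (expecVec P h) (expecVec P h)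

/-!
Let `μ = E[g]` and `μ_c = E[g | z = c]`. By the law of total covariance, `Var[g]` is
`∑ c, p_c Var[g | z = c]` plus the covariance matrix of `c ↦ μ_c` under the weights `p`, that is,
`∑ c, p_c (μ_c - μ) (μ_c - μ)ᵀ`. Conditional independence makes every `Var[g | z = c]`
block-diagonal, and `μ = p_c μ_c + (1 - p_c) E[g | z ≠ c]` gives `μ_c - μ = (1 - p_c) Δ(c)`.
-/

section Covariance

variable {Ω γ ι : Type*} [Fintype Ω] [Fintype γ] [Fintype ι]

lemma expecVec_apply (P : Ω → ℝ) (h : Ω → ι → ℝ) (i : ι) :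
    expecVec P h i = ∑ ω, P ω * h ω i := by
  simp [expecVec]

lemma covMat_apply (P : Ω → ℝ) (h : Ω → ι → ℝ) (i j : ι) :
    covMat P h i j = ∑ ω, P ω * (h ω i * h ω j) - expecVec P h i * expecVec P h j := by
  simp [covMat, Matrix.sum_apply, vecMulVec_apply]

lemma covMat_eq_sum_smul_vecMulVec_sub {P : Ω → ℝ} (hP : ∑ ω, P ω = 1) (h : Ω → ι → ℝ) :
    covMat P h = ∑ ω, P ω • vecMulVec (h ω - expecVec P h) (h ω - expecVec P h) := by
  ext i j
  have expand (ω : Ω) (a b : ℝ) : P ω * ((h ω i - a) * (h ω j - b)) =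
      P ω * (h ω i * h ω j) - P ω * h ω i * b - P ω * h ω j * a + P ω * (a * b) := by ring
  simp only [covMat_apply, Matrix.sum_apply, Matrix.smul_apply, vecMulVec_apply, Pi.sub_apply,
    smul_eq_mul, expand, sum_add_distrib, sum_sub_distrib, ← sum_mul, ← expecVec_apply, hP]
  ring

lemma sum_mixture_smul {R M : Type*} [Semiring R] [AddCommMonoid M] [Module R M]
    (p : γ → R) (Q : γ → Ω → R) (f : Ω → M) :
    ∑ ω, (∑ c, p c • Q c) ω • f ω = ∑ c, p c • ∑ ω, Q c ω • f ω := by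
  simp only [Finset.sum_apply, Pi.smul_apply, smul_eq_mul, sum_smul, smul_sum, mul_smul]
  exact sum_comm

lemma expecVec_mixture (p : γ → ℝ) (Q : γ → Ω → ℝ) (h : Ω → ι → ℝ) :
    expecVec (∑ c, p c • Q c) h = expecVec p fun c => expecVec (Q c) h :=
  sum_mixture_smul p Q h

theorem covMat_mixture (p : γ → ℝ) (Q : γ → Ω → ℝ) (h : Ω → ι → ℝ) :
    covMat (∑ c, p c • Q c) h =
      ∑ c, p c • covMat (Q c) h + covMat p fun c => expecVec (Q c) h := by
  simp only [covMat, sum_mixture_smul, expecVec_mixture, smul_sub, sum_sub_distrib]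
  abel

lemma expecVec_sub_expecVec_of_eq_add {P Q Q' : Ω → ℝ} {a : ℝ} (hP : P = a • Q + (1 - a) • Q')
    (h : Ω → ι → ℝ) :
    expecVec Q h - expecVec P h = (1 - a) • (expecVec Q h - expecVec Q' h) := by
  have hexp : expecVec P h = a • expecVec Q h + (1 - a) • expecVec Q' h := by
    simp only [hP, expecVec, Pi.add_apply, Pi.smul_apply, smul_eq_mul, add_smul, mul_smul,
      sum_add_distrib, smul_sum]
  rw [hexp]
  module

end Covariance

section Independence

variable {Ω κ R : Type*} [Fintype Ω] [Fintype κ] [CommSemiring R] {β : κ → Type*}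

/-- Independence of the family `f` of random variables under the weights `Q`: the joint mass
function is the product of the marginal ones. Testing single values suffices on a finite space. -/
def IndepWeights (Q : Ω → R) (f : (k : κ) → Ω → β k) : Prop :=
  ∀ v : (k : κ) → β k,
    (∑ ω, if ∀ k, f k ω = v k then Q ω else 0) = ∏ k, ∑ ω, if f k ω = v k then Q ω else 0

lemma sum_mul_comp_eq_sum_fiber {α : Type*} [DecidableEq α] (Q : Ω → R) (f : Ω → α) (F : α → R)
    {s : Finset α} (hs : ∀ ω, f ω ∈ s) :
    ∑ ω, Q ω * F (f ω) = ∑ x ∈ s, (∑ ω, if f ω = x then Q ω else 0) * F x := by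
  simp only [sum_mul, ite_mul, zero_mul]
  rw [sum_comm]
  simp [hs]

namespace IndepWeights

variable {Q : Ω → R} {f : (k : κ) → Ω → β k}

theorem sum_mul_prod (hf : IndepWeights Q f) (F : (k : κ) → β k → R) :
    ∑ ω, Q ω * ∏ k, F k (f k ω) = ∏ k, ∑ ω, Q ω * F k (f k ω) := by
  let s (k : κ) : Finset (β k) := univ.image (f k)
  let q (k : κ) (x : β k) : R := ∑ ω, if f k ω = x then Q ω else 0
  have hjoint (v : (k : κ) → β k) :
      (∑ ω, if (fun k => f k ω) = v then Q ω else 0) = ∏ k, q k (v k) := by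
    simpa only [funext_iff] using hf v
  calc ∑ ω, Q ω * ∏ k, F k (f k ω)
      = ∑ v ∈ Fintype.piFinset s,
          (∑ ω, if (fun k => f k ω) = v then Q ω else 0) * ∏ k, F k (v k) :=
        sum_mul_comp_eq_sum_fiber Q (fun ω k => f k ω) (fun v => ∏ k, F k (v k)) (by simp [s])
    _ = ∑ v ∈ Fintype.piFinset s, ∏ k, q k (v k) * F k (v k) := by
        simp only [hjoint, prod_mul_distrib]
    _ = ∏ k, ∑ x ∈ s k, q k x * F k x :=
        (prod_univ_sum s fun k x => q k x * F k x).symm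
    _ = ∏ k, ∑ ω, Q ω * F k (f k ω) :=
        prod_congr rfl fun k _ => (sum_mul_comp_eq_sum_fiber Q (f k) (F k) (by simp [s])).symm

theorem sum_mul_mul (hf : IndepWeights Q f) (hQ : ∑ ω, Q ω = 1) {k k' : κ} (hk : k ≠ k')
    (a : β k → R) (b : β k' → R) :
    ∑ ω, Q ω * (a (f k ω) * b (f k' ω)) =
      (∑ ω, Q ω * a (f k ω)) * ∑ ω, Q ω * b (f k' ω) := by
  let F : (l : κ) → β l → R := Function.update (Function.update 1 k a) k' b
  have hFk : F k = a := by simp [F, hk]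
  have hFk' : F k' = b := by simp [F]
  have hFl (l : κ) (hl : l ≠ k ∧ l ≠ k') : F l = 1 := by simp [F, hl]
  have hprod (ω : Ω) : ∏ l, F l (f l ω) = a (f k ω) * b (f k' ω) := by
    rw [Fintype.prod_eq_mul k k' hk fun l hl => by simp [hFl l hl], hFk, hFk']
  simp only [← hprod, hf.sum_mul_prod]
  rw [Fintype.prod_eq_mul k k' hk fun l hl => by simp [hFl l hl, hQ], hFk, hFk']

end IndepWeights

end Independence

section Blocks

lemma sum_smul_blockDiagonal' {γ κ R α : Type*} [Fintype γ] [DecidableEq κ]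
    {m n : κ → Type*} [Semiring R] [AddCommMonoid α] [Module R α] (p : γ → R)
    (M : γ → (k : κ) → Matrix (m k) (n k) α) :
    ∑ c, p c • blockDiagonal' (M c) = blockDiagonal' fun k => ∑ c, p c • M c k := by
  ext ⟨k, i⟩ ⟨k', j⟩
  rcases eq_or_ne k k' with rfl | hk
  · simp [Matrix.sum_apply]
  · simp [Matrix.sum_apply, blockDiagonal'_apply_ne _ _ _ hk]

variable {Ω κ : Type*} [Fintype Ω] [Fintype κ] {n : κ → Type*} [∀ k, Fintype (n k)]

theorem IndepWeights.covMat_sigma_apply_eq_zero {Q : Ω → ℝ} {f : (k : κ) → Ω → n k → ℝ}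
    (hf : IndepWeights Q f) (hQ : ∑ ω, Q ω = 1) {k k' : κ} (hk : k ≠ k') (i : n k) (j : n k') :
    covMat Q (fun ω (a : (k : κ) × n k) => f a.1 ω a.2) ⟨k, i⟩ ⟨k', j⟩ = 0 := by
  rw [covMat_apply, sub_eq_zero, expecVec_apply, expecVec_apply]
  exact hf.sum_mul_mul hQ hk (fun x => x i) (fun x => x j)

lemma covMat_eq_blockDiagonal' [DecidableEq κ] {Q : Ω → ℝ} {g : Ω → ((k : κ) × n k) → ℝ}
    (hg : ∀ k k', k ≠ k' → ∀ i j, covMat Q g ⟨k, i⟩ ⟨k', j⟩ = 0) :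
    covMat Q g = blockDiagonal' fun k => covMat Q fun ω i => g ω ⟨k, i⟩ := by
  ext ⟨k, i⟩ ⟨k', j⟩
  rcases eq_or_ne k k' with rfl | hk
  · simp only [blockDiagonal'_apply_eq, covMat_apply, expecVec_apply]
  · rw [blockDiagonal'_apply_ne _ _ _ hk, hg k k' hk]

end Blocks

section Conditioning

variable {Ω R : Type*} [Field R] {P : Ω → R}

lemma sum_eq_one_of_eq_ite_div [Fintype Ω] {s : Ω → Prop} [DecidablePred s] {Q : Ω → R} {a : R}
    (ha : a = ∑ ω, if s ω then P ω else 0) (ha0 : a ≠ 0)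
    (hQ : ∀ ω, Q ω = (if s ω then P ω else 0) / a) : ∑ ω, Q ω = 1 := by
  simp only [hQ, ← sum_div, ← ha, div_self ha0]

lemma eq_mixture_of_eq_ite_div {γ : Type*} [Fintype γ] [DecidableEq γ] {z : Ω → γ} {p : γ → R}
    {Q : γ → Ω → R} (hp : ∀ c, p c ≠ 0)
    (hQ : ∀ c ω, Q c ω = (if z ω = c then P ω else 0) / p c) :
    P = ∑ c, p c • Q c := by
  ext ω
  simp [hQ, mul_div_cancel₀ _ (hp _)]

lemma eq_smul_add_smul_of_eq_ite_div {s : Ω → Prop} [DecidablePred s] {Q Q' : Ω → R} {a : R}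
    (ha0 : a ≠ 0) (ha1 : a ≠ 1) (hQ : ∀ ω, Q ω = (if s ω then P ω else 0) / a)
    (hQ' : ∀ ω, Q' ω = (if ¬ s ω then P ω else 0) / (1 - a)) :
    P = a • Q + (1 - a) • Q' := by
  ext ω
  have ha1' : 1 - a ≠ 0 := sub_ne_zero.mpr ha1.symm
  by_cases hω : s ω <;> simp [hQ, hQ', hω, mul_div_cancel₀, ha0, ha1']

end Conditioning

theorem stmt13_general {Ω γ κ : Type*} [Fintype Ω] [Fintype γ] [DecidableEq γ] [Fintype κ]
    [DecidableEq κ] {n : κ → Type*} [∀ k, Fintype (n k)]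
    (P : Ω → ℝ) (hP : ∑ ω, P ω = 1) (z : Ω → γ) (p : γ → ℝ)
    (hp : ∀ c, p c = ∑ ω, if z ω = c then P ω else 0) (hp0 : ∀ c, p c ≠ 0) (hp1 : ∀ c, p c ≠ 1)
    (g : Ω → ((k : κ) × n k) → ℝ) (Pc Pnotc : γ → Ω → ℝ)
    (hPc : ∀ c ω, Pc c ω = (if z ω = c then P ω else 0) / p c)
    (hPnotc : ∀ c ω, Pnotc c ω = (if z ω ≠ c then P ω else 0) / (1 - p c))
    (huncorr : ∀ c k k', k ≠ k' → ∀ i j, covMat (Pc c) g ⟨k, i⟩ ⟨k', j⟩ = 0)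
    (Δ : γ → ((k : κ) × n k) → ℝ) (hΔ : ∀ c, Δ c = expecVec (Pc c) g - expecVec (Pnotc c) g) :
    covMat P g =
      blockDiagonal' (fun k => ∑ c, p c • covMat (Pc c) fun ω i => g ω ⟨k, i⟩) +
        ∑ c, (p c * (1 - p c) ^ 2) • vecMulVec (Δ c) (Δ c) := by
  have hpsum : ∑ c, p c = 1 := by
    simp only [hp]
    rw [sum_comm]
    simpa using hP
  have hmix : P = ∑ c, p c • Pc c := eq_mixture_of_eq_ite_div hp0 hPc
  have hmean : expecVec P g = expecVec p fun c => expecVec (Pc c) g := by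
    rw [← expecVec_mixture, ← hmix]
  have hdev (c : γ) : expecVec (Pc c) g - expecVec P g = (1 - p c) • Δ c :=
    hΔ c ▸ expecVec_sub_expecVec_of_eq_add
      (eq_smul_add_smul_of_eq_ite_div (hp0 c) (hp1 c) (hPc c) (hPnotc c)) g
  calc covMat P g
      = ∑ c, p c • covMat (Pc c) g + covMat p fun c => expecVec (Pc c) g := by
        rw [← covMat_mixture, ← hmix]
    _ = ∑ c, p c • covMat (Pc c) g +
          ∑ c, p c • vecMulVec ((1 - p c) • Δ c) ((1 - p c) • Δ c) := by
        simp only [covMat_eq_sum_smul_vecMulVec_sub hpsum, ← hmean, hdev]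
    _ = _ := by
        simp only [covMat_eq_blockDiagonal' (huncorr _), sum_smul_blockDiagonal', smul_vecMulVec,
          vecMulVec_smul, smul_smul, pow_two]

/-- closed-form variance under conditional independence. If the
random vectors `g_k` are conditionally independent given the categorical variable `z`,
then the covariance of their concatenation `g` decomposes as a block-diagonal matrix `B`
(whose `(k,k)` block is `Σ_c p_c Var[g_k | z = c]`) plus
`Σ_c p_c (1 − p_c)² Δ(c) Δ(c)ᵀ`, where `Δ(c) = E[g | z = c] − E[g | z ≠ c]`.
The identity is stated entrywise over the sigma-type index of the concatenation. -/
theorem stmt13 {Ω : Type*} [Fintype Ω] {C K : ℕ}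
    (P : Ω → ℝ) (hP : ∀ ω, 0 ≤ P ω) (hPsum : ∑ ω : Ω, P ω = 1)
    (z : Ω → Fin C) (p : Fin C → ℝ)
    (hp : ∀ c, p c = ∑ ω, if z ω = c then P ω else 0)
    (hp0 : ∀ c, 0 < p c) (hp1 : ∀ c, p c < 1)
    (n : Fin K → ℕ) (gk : (k : Fin K) → Ω → Fin (n k) → ℝ)
    (Pc : Fin C → Ω → ℝ)
    (hPc : ∀ c ω, Pc c ω = (if z ω = c then P ω else 0) / p c)
    (hcondindep : ∀ (c : Fin C) (v : (k : Fin K) → Fin (n k) → ℝ),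
      (∑ ω, if (∀ k, gk k ω = v k) then Pc c ω else 0) =
        ∏ k, ∑ ω, if gk k ω = v k then Pc c ω else 0) :
    let g : Ω → ((k : Fin K) × Fin (n k)) → ℝ := fun ω a => gk a.1 ω a.2
    let Pnotc : Fin C → Ω → ℝ := fun c ω => (if z ω ≠ c then P ω else 0) / (1 - p c)
    let Δ : Fin C → ((k : Fin K) × Fin (n k)) → ℝ := fun c =>
      expecVec (Pc c) g - expecVec (Pnotc c) g
    ∀ (k k' : Fin K) (i : Fin (n k)) (j : Fin (n k')),
      covMat P g ⟨k, i⟩ ⟨k', j⟩ =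
        (if h : k = k' then
            ∑ c, p c * covMat (Pc c) (gk k) i (Fin.cast (congrArg n h.symm) j)
          else 0) +
        ∑ c, p c * (1 - p c) ^ 2 * (Δ c ⟨k, i⟩ * Δ c ⟨k', j⟩) := by
  intro g Pnotc Δ k k' i j
  have hp0' (c : Fin C) : p c ≠ 0 := (hp0 c).ne'
  have hindep (c : Fin C) : IndepWeights (Pc c) gk := fun v => by convert hcondindep c v
  have huncorr (c : Fin C) (l l' : Fin K) (hl : l ≠ l') (a : Fin (n l)) (b : Fin (n l')) :
      covMat (Pc c) g ⟨l, a⟩ ⟨l', b⟩ = 0 :=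
    (hindep c).covMat_sigma_apply_eq_zero (sum_eq_one_of_eq_ite_div (hp c) (hp0' c) (hPc c)) hl a b
  have h := stmt13_general P hPsum z p hp hp0' (fun c => (hp1 c).ne) g Pc Pnotc hPc
    (fun _ _ => rfl) huncorr Δ fun _ => rfl
  simpa [g, blockDiagonal'_apply, Matrix.sum_apply, vecMulVec_apply, Fin.cast_eq_cast] using
    congr_fun₂ h ⟨k, i⟩ ⟨k', j⟩
end
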